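/- The kernel of the quantum antisymmetrizer p := [2]^{−1} · (q^{−1}·Id_{V⊗V} − R) equals the K-span of the set I := {e_i ⊗ e_i : 1 ≤ i ≤ m} ∪ {e_i ⊗ e_j + (−1)^{|i||j|} q^{−1} e_j ⊗ e_i : 1 ≤ i < j ≤ m+n}; equivalently, span(I) is exactly the q^{−1}-eigenspace of R. (Hence the quantum exterior square ⋀_q^2(V) := (V ⊗ V)/⟨I⟩ is realized as the image of p.) -/

import Mathlib

set_option synthInstance.maxHeartbeats 400000
set_option maxHeartbeats 1000000

noncomputable section

/-- The base field `K = ℚ(q)`. -/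
abbrev K : Type := RatFunc ℚ

/-- The variable `q`. -/
def q : K := RatFunc.X

/-- The super sign `(-1)^{|i||j|}`, where the parity `|i|` of an index
`i : Fin (m+n)` (0-based) is `0` if `i < m` and `1` otherwise. -/
def sgn (m : ℕ) {M : ℕ} (i j : Fin M) : K :=
  if m ≤ (i : ℕ) ∧ m ≤ (j : ℕ) then -1 else 1

/-- The matrix (in the standard basis of `V ⊗ V`, `V = K^{m+n}`, indices 0-based)
of the `U_q(gl(m|n))` R-matrix: `R(eᵢ ⊗ eᵢ) = q⁻¹ eᵢ ⊗ eᵢ` for `i` of parity 0,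
`R(eᵢ ⊗ eᵢ) = -q eᵢ ⊗ eᵢ` for `i` of parity 1,
`R(eᵢ ⊗ eⱼ) = (-1)^{|i||j|} eⱼ ⊗ eᵢ` for `i < j`, and
`R(eᵢ ⊗ eⱼ) = (-1)^{|i||j|} eⱼ ⊗ eᵢ + (q⁻¹ - q) eᵢ ⊗ eⱼ` for `i > j`.
Entry `(p, r)` is the coefficient of `e_{p.1} ⊗ e_{p.2}` in `R(e_{r.1} ⊗ e_{r.2})`. -/
def Rmat (m n : ℕ) :
    Matrix (Fin (m + n) × Fin (m + n)) (Fin (m + n) × Fin (m + n)) K :=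
  fun p r =>
    if r.1 = r.2 then
      (if p = r then (if (r.1 : ℕ) < m then q⁻¹ else -q) else 0)
    else
      (if p.1 = r.2 ∧ p.2 = r.1 then sgn m r.1 r.2 else 0)
        + (if r.2 < r.1 ∧ p = r then q⁻¹ - q else 0)

/-- The degree-2 quantum antisymmetrizer `p = [2]⁻¹·(q⁻¹·Id - R)` on `V ⊗ V`,
where `[2] = q + q⁻¹`. -/
def pA (m n : ℕ) :
    Matrix (Fin (m + n) × Fin (m + n)) (Fin (m + n) × Fin (m + n)) K :=
  (q + q⁻¹)⁻¹ • (q⁻¹ • (1 : Matrix (Fin (m + n) × Fin (m + n)) (Fin (m + n) × Fin (m + n)) K) - Rmat m n)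

/-- The basis vector `eᵢ ⊗ eⱼ` of `V ⊗ V`. -/
def eV (m n : ℕ) (i j : Fin (m + n)) : Fin (m + n) × Fin (m + n) → K :=
  Pi.single (i, j) 1

/-- The set `I = {eᵢ ⊗ eᵢ : i of parity 0} ∪
{eᵢ ⊗ eⱼ + (-1)^{|i||j|} q⁻¹ eⱼ ⊗ eᵢ : i < j}` of defining relations of the
quantum exterior square (indices 0-based, so parity 0 means `i < m`). -/
def Iset (m n : ℕ) : Set (Fin (m + n) × Fin (m + n) → K) :=
  { x | (∃ i : Fin (m + n), (i : ℕ) < m ∧ x = eV m n i i) ∨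
        (∃ i j : Fin (m + n), i < j ∧
          x = eV m n i j + (sgn m i j * q⁻¹) • eV m n j i) }

theorem hq0 : q ≠ 0 := RatFunc.X_ne_zero

theorem hq2 : q + q⁻¹ ≠ 0 := by
  intro h
  have h0 := hq0
  have h1 : q * q + 1 = 0 := by
    have h2 : q * (q + q⁻¹) = 0 := by rw [h, mul_zero]
    rwa [mul_add, mul_inv_cancel₀ h0] at h2
  have h3 : algebraMap (Polynomial ℚ) (RatFunc ℚ) (Polynomial.X * Polynomial.X + 1) = 0 := by
    rw [map_add, map_mul, map_one, RatFunc.algebraMap_X]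
    exact h1
  have h4 : (Polynomial.X * Polynomial.X + 1 : Polynomial ℚ) = 0 :=
    (map_eq_zero_iff _ (RatFunc.algebraMap_injective ℚ)).1 h3
  have h5 := congrArg (Polynomial.eval 0) h4
  simp at h5

theorem sgn_sq (m : ℕ) {M : ℕ} (i j : Fin M) : sgn m i j * sgn m i j = 1 := by
  unfold sgn; split_ifs <;> ring

theorem sgn_comm (m : ℕ) {M : ℕ} (i j : Fin M) : sgn m i j = sgn m j i := by
  unfold sgn; simp only [and_comm]

theorem R_apply_diag (m n : ℕ) (x : Fin (m + n) × Fin (m + n) → K) (a : Fin (m + n)) :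
    (Rmat m n).mulVec x (a, a) = (if (a : ℕ) < m then q⁻¹ else -q) * x (a, a) := by
  unfold Matrix.mulVec dotProduct
  rw [Finset.sum_eq_single (a, a)]
  · simp [Rmat]
  · rintro ⟨b, c⟩ - h
    have : Rmat m n (a, a) (b, c) = 0 := by
      simp only [Rmat, Prod.mk.injEq, ne_eq] at h ⊢
      grind
    beta_reduce; rw [this, zero_mul]
  · simp

theorem R_apply_off (m n : ℕ) (x : Fin (m + n) × Fin (m + n) → K) (a b : Fin (m + n))
    (hab : a ≠ b) :
    (Rmat m n).mulVec x (a, b) =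
      sgn m a b * x (b, a) + (if b < a then q⁻¹ - q else 0) * x (a, b) := by
  unfold Matrix.mulVec dotProduct
  have hne : ((b, a) : Fin (m + n) × Fin (m + n)) ≠ (a, b) := by
    simp [hab.symm]
  rw [Fintype.sum_eq_add (b, a) (a, b) hne]
  · have e1 : Rmat m n (a, b) (b, a) = sgn m a b := by
      simp [Rmat, hab, hab.symm, sgn_comm m b a]
    have e2 : Rmat m n (a, b) (a, b) = if b < a then q⁻¹ - q else 0 := by
      simp [Rmat, hab, hab.symm]
    beta_reduce; rw [e1, e2]
  · rintro ⟨c, d⟩ ⟨h1, h2⟩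
    have : Rmat m n (a, b) (c, d) = 0 := by
      simp only [Rmat, Prod.mk.injEq, ne_eq] at h1 h2 ⊢
      have h3 : ¬ (a = d ∧ b = c) := fun h => h1 ⟨h.2.symm, h.1.symm⟩
      have h4 : ¬ (a = c ∧ b = d) := fun h => h2 ⟨h.1.symm, h.2.symm⟩
      simp [h3, h4]
    beta_reduce; rw [this, zero_mul]

theorem eig_iff (m n : ℕ) (x : Fin (m + n) × Fin (m + n) → K) :
    (Rmat m n).mulVec x = q⁻¹ • x ↔
      (∀ a : Fin (m + n), m ≤ (a : ℕ) → x (a, a) = 0) ∧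
      (∀ a b : Fin (m + n), a < b → x (b, a) = sgn m a b * q⁻¹ * x (a, b)) := by
  have h0 := hq0
  constructor
  · intro h
    refine ⟨fun a ha => ?_, fun a b hab => ?_⟩
    · have := congrFun h (a, a)
      rw [R_apply_diag, if_neg (by omega), Pi.smul_apply, smul_eq_mul] at this
      have h2 : (q + q⁻¹) * x (a, a) = 0 := by linear_combination -this
      exact (mul_eq_zero.1 h2).resolve_left hq2
    · have := congrFun h (a, b)
      rw [R_apply_off _ _ _ _ _ hab.ne, if_neg hab.le.not_gt, Pi.smul_apply, smul_eq_mul] at this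
      linear_combination sgn m a b * this - x (b, a) * sgn_sq m a b
  · rintro ⟨h1, h2⟩
    funext ⟨a, b⟩
    rw [Pi.smul_apply, smul_eq_mul]
    rcases lt_trichotomy a b with hab | rfl | hab
    · rw [R_apply_off _ _ _ _ _ hab.ne, if_neg hab.le.not_gt, h2 a b hab]
      linear_combination q⁻¹ * x (a, b) * sgn_sq m a b
    · rw [R_apply_diag]
      split_ifs with h
      · rfl
      · rw [h1 a (by omega)]; simp
    · rw [R_apply_off _ _ _ _ _ hab.ne', if_pos hab, h2 b a hab, sgn_comm m a b]
      have := mul_inv_cancel₀ h0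
      linear_combination -sgn m b a * x (b, a) * this

theorem mem_of_eig (m n : ℕ) (x : Fin (m + n) × Fin (m + n) → K)
    (h1 : ∀ a : Fin (m + n), m ≤ (a : ℕ) → x (a, a) = 0)
    (h2 : ∀ a b : Fin (m + n), a < b → x (b, a) = sgn m a b * q⁻¹ * x (a, b)) :
    x ∈ Submodule.span K (Iset m n) := by
  have key : x = ∑ p : Fin (m + n) × Fin (m + n),
      (if p.1 < p.2 then
        x p • (eV m n p.1 p.2 + (sgn m p.1 p.2 * q⁻¹) • eV m n p.2 p.1)
      else if p.1 = p.2 then x p • eV m n p.1 p.2 else 0) := by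
    funext ⟨a, b⟩
    rw [Finset.sum_apply]
    rcases lt_trichotomy a b with hab | rfl | hab
    · rw [Finset.sum_eq_single (a, b)]
      · simp [hab, eV, hab.ne, hab.ne']
      · rintro ⟨c, d⟩ - h
        simp only [eV]
        split_ifs with h3 h4 <;> simp [Pi.single_apply] <;> grind
      · simp
    · rw [Finset.sum_eq_single (a, a)]
      · simp [eV]
      · rintro ⟨c, d⟩ - h
        simp only [eV]
        split_ifs with h3 h4 <;> simp [Pi.single_apply] <;> grind
      · simp
    · rw [Finset.sum_eq_single (b, a)]
      · simp [hab, eV, hab.ne, hab.ne', h2 b a hab]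
        ring
      · rintro ⟨c, d⟩ - h
        simp only [eV]
        split_ifs with h3 h4 <;> simp [Pi.single_apply] <;> grind
      · simp
  rw [key]
  refine Submodule.sum_mem _ ?_
  rintro ⟨c, d⟩ -
  dsimp only
  split_ifs with h3 h4
  · exact Submodule.smul_mem _ _ (Submodule.subset_span (Or.inr ⟨c, d, h3, rfl⟩))
  · subst h4
    by_cases hc : (c : ℕ) < m
    · exact Submodule.smul_mem _ _ (Submodule.subset_span (Or.inl ⟨c, hc, rfl⟩))
    · rw [h1 c (by omega), zero_smul]; exact Submodule.zero_mem _
  · exact Submodule.zero_mem _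

theorem span_eq_eig (m n : ℕ) : Submodule.span K (Iset m n)
      = Module.End.eigenspace (Matrix.toLin' (Rmat m n)) q⁻¹ := by
  apply le_antisymm
  · rw [Submodule.span_le]
    intro x hx
    rw [SetLike.mem_coe, Module.End.mem_eigenspace_iff, Matrix.toLin'_apply, eig_iff]
    rcases hx with ⟨i, hi, rfl⟩ | ⟨i, j, hij, rfl⟩
    · refine ⟨fun a ha => ?_, fun a b hab => ?_⟩
      · simp only [eV, Pi.single_apply, Prod.mk.injEq]
        rw [if_neg]
        rintro ⟨rfl, -⟩
        omega
      · simp only [eV, Pi.single_apply, Prod.mk.injEq]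
        rw [if_neg, if_neg, mul_zero]
        · rintro ⟨rfl, rfl⟩; exact lt_irrefl _ hab
        · rintro ⟨rfl, rfl⟩; exact lt_irrefl _ hab
    · refine ⟨fun a ha => ?_, fun a b hab => ?_⟩
      · simp only [eV, Pi.add_apply, Pi.smul_apply, Pi.single_apply, Prod.mk.injEq]
        rw [if_neg, if_neg]
        · simp
        · rintro ⟨rfl, rfl⟩; exact lt_irrefl _ hij
        · rintro ⟨rfl, rfl⟩; exact lt_irrefl _ hij
      · simp only [eV, Pi.add_apply, Pi.smul_apply, Pi.single_apply, Prod.mk.injEq]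
        have n1 : ¬ (b = i ∧ a = j) := by
          rintro ⟨rfl, rfl⟩; exact lt_asymm hij hab
        have n2 : ¬ (a = j ∧ b = i) := fun h => n1 ⟨h.2, h.1⟩
        rw [if_neg n1, if_neg n2]
        by_cases h : a = i ∧ b = j
        · obtain ⟨rfl, rfl⟩ := h
          simp
        · rw [if_neg h, if_neg (fun h' => h ⟨h'.2, h'.1⟩)]
          simp
  · intro x hx
    rw [Module.End.mem_eigenspace_iff, Matrix.toLin'_apply, eig_iff] at hx
    exact mem_of_eig m n x hx.1 hx.2

theorem antisymmetrizer_kernel (m n : ℕ) :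
    LinearMap.ker (Matrix.toLin' (pA m n)) = Submodule.span K (Iset m n) ∧
    Submodule.span K (Iset m n)
      = Module.End.eigenspace (Matrix.toLin' (Rmat m n)) q⁻¹ := by
  refine ⟨?_, span_eq_eig m n⟩
  rw [span_eq_eig]
  ext x
  rw [LinearMap.mem_ker, Module.End.mem_eigenspace_iff, Matrix.toLin'_apply, Matrix.toLin'_apply,
    pA, Matrix.smul_mulVec, Matrix.sub_mulVec, Matrix.smul_mulVec, Matrix.one_mulVec,
    smul_eq_zero_iff_right (inv_ne_zero hq2), sub_eq_zero, eq_comm]
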